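/- For every integer n ≥ 2, the complete bipartite graph K_{n,n} satisfies n ≤ χ'^t_d(K_{n,n}) ≤ 2n. -/

import Mathlib

/-!
The edges of `K_{n,n}` are the cells `(i, j)` of an `n × n` grid, two edges being adjacent when the
cells are distinct and share a row or a column.

Lower bound: the `n` cells of a row are pairwise adjacent, so they receive distinct colors.

Upper bound: give the cells `(i, 0)` of the first column the pairwise distinct colors `n + i`, and
every other cell `(i, j)` the color `(i + j) mod n`. This is proper with `2n` colors. The class
`{(i, 0)}` dominates every `(i, j)` with `j ≠ 0`, and every `(i', 0)` with `i' ≠ i`; since `n ≥ 2`,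
each cell of the first column is dominated too.
-/

open SimpleGraph

/-- Two edges of a simple graph are adjacent if they are distinct and share an endpoint. -/
def edgeAdj {V : Type*} (e f : Sym2 V) : Prop :=
  e ≠ f ∧ ∃ v, v ∈ e ∧ v ∈ f

/-- `c` is a total dominator edge coloring of `G` using colors from `{0, …, n-1}`:
a proper edge coloring such that every edge is adjacent to every edge of some
nonempty color class. -/
def IsTDEColoring {V : Type*} (G : SimpleGraph V) (n : ℕ) (c : Sym2 V → ℕ) : Prop :=
  (∀ e ∈ G.edgeSet, c e < n) ∧
  (∀ e ∈ G.edgeSet, ∀ f ∈ G.edgeSet, edgeAdj e f → c e ≠ c f) ∧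
  (∀ e ∈ G.edgeSet, ∃ i, (∃ f ∈ G.edgeSet, c f = i) ∧
      ∀ f ∈ G.edgeSet, c f = i → edgeAdj e f)

/-- The total dominator edge chromatic number of `G`: the minimum number of colors
in a total dominator edge coloring of `G`. -/
noncomputable def tdec {V : Type*} (G : SimpleGraph V) : ℕ :=
  sInf {n | ∃ c : Sym2 V → ℕ, IsTDEColoring G n c}

theorem mem_edgeSet_completeBipartite {n : ℕ} {e : Sym2 (Fin n ⊕ Fin n)} :
    e ∈ (completeBipartiteGraph (Fin n) (Fin n)).edgeSet ↔
      ∃ i j, e = s(Sum.inl i, Sum.inr j) := by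
  induction e using Sym2.ind with
  | _ x y => rcases x with x | x <;> rcases y with y | y <;> simp

theorem edgeAdj_cell {n : ℕ} {i j i' j' : Fin n} :
    edgeAdj (s(Sum.inl i, Sum.inr j) : Sym2 (Fin n ⊕ Fin n)) s(Sum.inl i', Sum.inr j') ↔
      ¬ (i = i' ∧ j = j') ∧ (i = i' ∨ j = j') := by
  simp [edgeAdj]

/-- The color of the cell `(i, j)`: the first column gets the private colors `n + i`, the other
columns the cyclic Latin square. -/
def cellColor (n : ℕ) (i j : Fin n) : ℕ :=
  if (j : ℕ) = 0 then n + i else (i + j : ℕ) % n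

/-- `cellColor` on the edges of `K_{n,n}`; pairs that are not edges get the junk color `0`. -/
def edgeColor (n : ℕ) : Sym2 (Fin n ⊕ Fin n) → ℕ :=
  Sym2.lift ⟨fun
    | .inl i, .inr j => cellColor n i j
    | .inr j, .inl i => cellColor n i j
    | _, _ => 0, by rintro (_ | _) (_ | _) <;> rfl⟩

theorem edgeColor_cell {n : ℕ} (i j : Fin n) :
    edgeColor n s(Sum.inl i, Sum.inr j) = cellColor n i j := rfl

theorem cellColor_lt {n : ℕ} (i j : Fin n) : cellColor n i j < 2 * n := by
  have := Nat.mod_lt (i + j : ℕ) i.pos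
  unfold cellColor
  split <;> omega

theorem cellColor_eq_add_iff {n : ℕ} {i j k : Fin n} :
    cellColor n i j = n + k ↔ i = k ∧ (j : ℕ) = 0 := by
  have := Nat.mod_lt (i + j : ℕ) i.pos
  unfold cellColor
  rw [Fin.ext_iff]
  split <;> omega

/-- A line (row or column) of the cyclic Latin square contains no repeated entry. -/
theorem eq_of_add_mod_eq {n a b c : ℕ} (hb : b < n) (hc : c < n)
    (h : (a + b) % n = (a + c) % n) : b = c :=
  Nat.ModEq.eq_of_lt_of_lt (Nat.ModEq.add_left_cancel' a h) hb hc

theorem cellColor_proper {n : ℕ} {i j i' j' : Fin n} (h : i = i' ∨ j = j')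
    (hc : cellColor n i j = cellColor n i' j') : i = i' ∧ j = j' := by
  by_cases hj : (j : ℕ) = 0
  · rw [(cellColor_eq_add_iff (k := i)).2 ⟨rfl, hj⟩, eq_comm, cellColor_eq_add_iff] at hc
    exact ⟨hc.1.symm, Fin.ext (hj.trans hc.2.symm)⟩
  by_cases hj' : (j' : ℕ) = 0
  · rw [(cellColor_eq_add_iff (i := i') (k := i')).2 ⟨rfl, hj'⟩, cellColor_eq_add_iff] at hc
    exact absurd hc.2 hj
  simp only [cellColor, hj, hj', if_false] at hc
  rcases h with rfl | rfl
  · exact ⟨rfl, Fin.ext (eq_of_add_mod_eq j.2 j'.2 hc)⟩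
  · rw [Nat.add_comm, Nat.add_comm (i' : ℕ)] at hc
    exact ⟨Fin.ext (eq_of_add_mod_eq i.2 i'.2 hc), rfl⟩

theorem isTDEColoring_edgeColor {n : ℕ} (hn : 2 ≤ n) :
    IsTDEColoring (completeBipartiteGraph (Fin n) (Fin n)) (2 * n) (edgeColor n) := by
  simp only [IsTDEColoring, mem_edgeSet_completeBipartite]
  refine ⟨?_, ?_, ?_⟩
  · rintro _ ⟨i, j, rfl⟩
    exact cellColor_lt i j
  · rintro _ ⟨i, j, rfl⟩ _ ⟨i', j', rfl⟩ h hc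
    rw [edgeAdj_cell] at h
    exact h.1 (cellColor_proper h.2 hc)
  · rintro _ ⟨i, j, rfl⟩
    have : NeZero n := ⟨by omega⟩
    have : Nontrivial (Fin n) := Fin.nontrivial_iff_two_le.2 hn
    -- The row of a first-column cell adjacent to `(i, j)`.
    obtain ⟨k, hk⟩ : ∃ k : Fin n, ¬ (i = k ∧ j = 0) ∧ (i = k ∨ j = 0) := by
      by_cases hj : j = 0
      · obtain ⟨k, hk⟩ := exists_ne i
        exact ⟨k, fun h => hk h.1.symm, Or.inr hj⟩
      · exact ⟨i, fun h => hj h.2, Or.inl rfl⟩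
    refine ⟨n + k, ⟨_, ⟨k, 0, rfl⟩, ?_⟩, ?_⟩
    · rw [edgeColor_cell, cellColor_eq_add_iff]
      simp
    rintro _ ⟨a, b, rfl⟩ hab
    rw [edgeColor_cell, cellColor_eq_add_iff] at hab
    obtain ⟨rfl, hb⟩ := hab
    obtain rfl : b = 0 := Fin.ext (by simpa using hb)
    exact edgeAdj_cell.2 hk

theorem le_of_isTDEColoring {n m : ℕ} (hn : 0 < n) {c : Sym2 (Fin n ⊕ Fin n) → ℕ}
    (h : IsTDEColoring (completeBipartiteGraph (Fin n) (Fin n)) m c) : n ≤ m := by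
  obtain ⟨hlt, hproper, -⟩ := h
  have hmem (j : Fin n) := mem_edgeSet_completeBipartite.2 ⟨(⟨0, hn⟩ : Fin n), j, rfl⟩
  have hinj : Function.Injective fun j : Fin n => (⟨c _, hlt _ (hmem j)⟩ : Fin m) := by
    intro j j' hjj
    by_contra hne
    exact hproper _ (hmem j) _ (hmem j') (edgeAdj_cell.2 ⟨fun h => hne h.2, Or.inl rfl⟩)
      (Fin.ext_iff.1 hjj)
  simpa using Fintype.card_le_of_injective _ hinj

/-- For n ≥ 2, the complete bipartite graph K_{n,n} satisfies
n ≤ χ'ᵗ_d(K_{n,n}) ≤ 2n. -/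
theorem tdec_completeBipartite_eq (n : ℕ) (hn : 2 ≤ n) :
    n ≤ tdec (completeBipartiteGraph (Fin n) (Fin n)) ∧
    tdec (completeBipartiteGraph (Fin n) (Fin n)) ≤ 2 * n := by
  have hmem : 2 * n ∈ {m | ∃ c : Sym2 (Fin n ⊕ Fin n) → ℕ,
      IsTDEColoring (completeBipartiteGraph (Fin n) (Fin n)) m c} :=
    ⟨_, isTDEColoring_edgeColor hn⟩
  -- The infimum is attained, the set of admissible color counts being nonempty.
  obtain ⟨c, hc⟩ := Nat.sInf_mem ⟨_, hmem⟩
  exact ⟨le_of_isTDEColoring (by omega) hc, Nat.sInf_le hmem⟩
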